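/- Let A ≤ B be integers, D = B − A, M = max{|A|, |B|}. Let F ∈ ℚ(X) be a rational fraction of degree at most d ≥ 1, let S be a set of integers in [A, B] containing no poles of F, let η ≥ 1 be a real number, and let H ≥ max{4, log(2M)}. Assume: (1) h(F(x)) ≤ H for every x ∈ S; (2) S contains at least D/η elements; (3) D ≥ max{η·d³·H, 4·η·d}. Then h(F) ≤ H + 960·η·d·log(η·d·H) + d·log(2M) + log(d+1). -/

import Mathlib

open Polynomial

/-- The height of a rational number `q = p/q` in lowest terms: `h(x) = log max{|p|, |q|}`. -/
noncomputable def ratHeight (q : ℚ) : ℝ := Real.log (max |(q.num : ℝ)| (q.den : ℝ))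

/-- The height of the rational fraction `F = P/Q` in lowest terms (`P, Q ∈ ℤ[X]` coprime):
the maximum of `log |c|` over the nonzero coefficients `c` of `P` and `Q`; since some
coefficient of `Q` is a nonzero integer, this maximum equals
`log (max over all coefficients of |c|)`. -/
noncomputable def fracHeight (P Q : Polynomial ℤ) : ℝ :=
  Real.log (max (⨆ i, |(P.coeff i : ℝ)|) (⨆ i, |(Q.coeff i : ℝ)|))

/-!
Write `g x = gcd (P x, Q x)` for the factor that cancels in `P x / Q x`. Since
`log max (|P x|, |Q x|) = log (g x) + h (F x)`, finding `d + 1` points of `S` at which `g` is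
small bounds the coefficients of `P` and `Q` by Lagrange interpolation, so it is enough to bound
the average of `log g` over `S`.

Every `g x` divides the resultant `R` of `P` and `Q`. For a prime `p ∣ R`, one of `P`, `Q` is
nonzero modulo `p`, and Newton interpolation at greedily chosen nodes `a₁, …, a_k ∈ S`, `k ≤ d`,
gives `v_p (g x) ≤ ∑ i, v_p (x - aᵢ)`; summing over `x ∈ S` bounds the total `p`-adic
cancellation by `d * (v_p R + (B - A) / (p - 1))`. By a weak form of Mertens' theorem,
`∑ p ∣ R, log p / (p - 1)` is only of size `log log R`, while `log R` is bounded in terms of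
`h F` itself. This yields a self-referential inequality for the average, in which the average
occurs on the right-hand side only with a small coefficient.
-/

open scoped Nat

section PrimeSums

theorem log_eq_sum_primeFactors_of_dvd {n R : ℕ} (hR : R ≠ 0) (h : n ∣ R) :
    Real.log n = ∑ p ∈ R.primeFactors, n.factorization p * Real.log p := by
  rw [Real.log_nat_eq_sum_factorization, Finsupp.sum_of_support_subset]
  · simpa using Nat.primeFactors_mono h hR
  · simp

theorem div_le_four_mul_factorization_factorial {p n : ℕ} (hp : p.Prime) (hpn : p ≤ n) :
    (n : ℝ) / (p - 1) ≤ 4 * (n !).factorization p := by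
  have hp2 : (2 : ℝ) ≤ p := mod_cast hp.two_le
  have hdiv : (n / p : ℕ) ≤ (n !).factorization p := by
    have hdvd : (p * (n / p))! ∣ n ! := Nat.factorial_dvd_factorial (Nat.mul_div_le n p)
    have := (Nat.factorization_le_iff_dvd (by positivity) (by positivity)).2 hdvd p
    rw [Nat.factorization_factorial_mul hp] at this
    lia
  have hlt : (n : ℝ) ≤ 2 * p * (n / p : ℕ) := by
    have := Nat.div_add_mod n p
    have := Nat.mod_lt n hp.pos
    have := Nat.div_pos hpn hp.pos
    exact_mod_cast (by nlinarith : n ≤ 2 * p * (n / p))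
  have hdiv' : ((n / p : ℕ) : ℝ) ≤ (n !).factorization p := mod_cast hdiv
  rw [div_le_iff₀ (by linarith)]
  calc (n : ℝ) ≤ 2 * p * (n / p : ℕ) := hlt
    _ ≤ 2 * (2 * (p - 1)) * (n !).factorization p := by
        gcongr <;> linarith
    _ = _ := by ring

theorem sum_log_div_pred_primesLE_le (n : ℕ) :
    ∑ p ∈ n.primesLE, Real.log p / (p - 1) ≤ 4 * Real.log n := by
  obtain rfl | hn := n.eq_zero_or_pos
  · simp
  refine le_of_mul_le_mul_left ?_ (Nat.cast_pos (α := ℝ).2 hn)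
  have hsupp : (n !).primeFactors = n.primesLE := by
    ext p
    rw [Nat.mem_primeFactors, Nat.mem_primesLE]
    exact ⟨fun ⟨hp, hdvd, _⟩ => ⟨hp.dvd_factorial.1 hdvd, hp⟩,
      fun ⟨hle, hp⟩ => ⟨hp, hp.dvd_factorial.2 hle, n.factorial_ne_zero⟩⟩
  calc n * ∑ p ∈ n.primesLE, Real.log p / (p - 1)
      = ∑ p ∈ n.primesLE, n / (p - 1) * Real.log p := by
        rw [Finset.mul_sum]
        exact Finset.sum_congr rfl fun p _ => by ring
    _ ≤ ∑ p ∈ n.primesLE, 4 * (n !).factorization p * Real.log p := by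
        gcongr with p hp
        exact div_le_four_mul_factorization_factorial (Nat.prime_of_mem_primesLE hp)
          (Nat.le_of_mem_primesLE hp)
    _ = 4 * Real.log (n !) := by
        rw [log_eq_sum_primeFactors_of_dvd n.factorial_ne_zero dvd_rfl, hsupp, Finset.mul_sum]
        simp only [mul_assoc]
    _ ≤ 4 * Real.log ((n : ℝ) ^ n) := by
        gcongr
        exact_mod_cast n.factorial_le_pow
    _ = n * (4 * Real.log n) := by rw [Real.log_pow]; ring

theorem sum_log_div_pred_primeFactors_gt_le {R n : ℕ} (hR : R ≠ 0) (hn : 0 < n) :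
    ∑ p ∈ R.primeFactors with n < p, Real.log p / (p - 1) ≤ Real.log R / n := by
  have hterm : ∀ p ∈ R.primeFactors.filter (n < ·),
      Real.log p / ((p : ℝ) - 1) ≤ R.factorization p * Real.log p / n := by
    intro p hp
    obtain ⟨hpR, hnp⟩ := Finset.mem_filter.1 hp
    have hlog : 0 ≤ Real.log p := Real.log_natCast_nonneg p
    have hle : (n : ℝ) ≤ p - 1 := le_sub_iff_add_le.2 (mod_cast hnp)
    have hone : (1 : ℝ) ≤ R.factorization p := mod_cast
      (Nat.prime_of_mem_primeFactors hpR).factorization_pos_of_dvd hR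
        (Nat.dvd_of_mem_primeFactors hpR)
    gcongr
    exact le_mul_of_one_le_left hlog hone
  calc ∑ p ∈ R.primeFactors with n < p, Real.log p / (p - 1)
      ≤ ∑ p ∈ R.primeFactors with n < p, R.factorization p * Real.log p / n :=
        Finset.sum_le_sum hterm
    _ ≤ ∑ p ∈ R.primeFactors, R.factorization p * Real.log p / n :=
        Finset.sum_le_sum_of_subset_of_nonneg (Finset.filter_subset _ _) fun p _ _ => by
          have := Real.log_natCast_nonneg p
          positivity
    _ = Real.log R / n := by
        rw [← Finset.sum_div, ← log_eq_sum_primeFactors_of_dvd hR dvd_rfl]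

theorem sum_log_div_pred_primeFactors_le {R : ℕ} (hR : R ≠ 0) :
    ∑ p ∈ R.primeFactors, Real.log p / (p - 1) ≤ 4 * Real.log (Real.log R + 1) + 1 := by
  obtain rfl | hR1 : R = 1 ∨ 1 < R := by lia
  · simp
  have hlogR : 0 < Real.log R := Real.log_pos (mod_cast hR1)
  set n : ℕ := ⌈Real.log R⌉₊
  have hn : 0 < n := Nat.ceil_pos.2 hlogR
  have hsmall : ∑ p ∈ R.primeFactors with ¬ n < p, Real.log p / ((p : ℝ) - 1)
      ≤ 4 * Real.log (Real.log R + 1) := by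
    calc ∑ p ∈ R.primeFactors with ¬ n < p, Real.log p / ((p : ℝ) - 1)
        ≤ ∑ p ∈ n.primesLE, Real.log p / ((p : ℝ) - 1) := by
          refine Finset.sum_le_sum_of_subset_of_nonneg ?_ fun p hp _ => ?_
          · grind [Nat.mem_primesLE]
          · have : (1 : ℝ) ≤ p := mod_cast (Nat.prime_of_mem_primesLE hp).one_le
            exact div_nonneg (Real.log_natCast_nonneg p) (by linarith)
      _ ≤ 4 * Real.log n := sum_log_div_pred_primesLE_le n
      _ ≤ 4 * Real.log (Real.log R + 1) := by
          gcongr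
          exact (Nat.ceil_lt_add_one hlogR.le).le
  have hlarge : ∑ p ∈ R.primeFactors with n < p, Real.log p / ((p : ℝ) - 1) ≤ 1 :=
    (sum_log_div_pred_primeFactors_gt_le hR hn).trans
      (div_le_one_of_le₀ (Nat.le_ceil _) n.cast_nonneg)
  rw [← Finset.sum_filter_add_sum_filter_not _ (n < ·), add_comm]
  exact add_le_add hsmall hlarge

theorem prod_natAbs_sub_Icc_erase (a : ℤ) (m n : ℕ) :
    ∏ x ∈ (Finset.Icc (a - m) (a + n)).erase a, (x - a).natAbs = m ! * n ! := by
  have hsplit : (Finset.Icc (a - m) (a + n)).erase a =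
      (Finset.range m).image (fun i : ℕ => a - (i + 1 : ℕ)) ∪
        (Finset.range n).image (fun i : ℕ => a + (i + 1 : ℕ)) := by
    ext x
    simp only [Finset.mem_erase, Finset.mem_Icc, Finset.mem_union, Finset.mem_image,
      Finset.mem_range]
    constructor
    · rintro ⟨hne, hle, hge⟩
      rcases lt_or_gt_of_ne hne with hlt | hgt
      · exact .inl ⟨(a - x).toNat - 1, by lia, by lia⟩
      · exact .inr ⟨(x - a).toNat - 1, by lia, by lia⟩
    · lia
  have hdisj : Disjoint ((Finset.range m).image (fun i : ℕ => a - (i + 1 : ℕ)))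
      ((Finset.range n).image (fun i : ℕ => a + (i + 1 : ℕ))) := by
    rw [Finset.disjoint_left]
    grind
  rw [hsplit, Finset.prod_union hdisj, Finset.prod_image (by simp), Finset.prod_image (by simp)]
  simp only [sub_sub_cancel_left, add_sub_cancel_left, Int.natAbs_neg, Int.natAbs_natCast,
    Finset.prod_range_add_one_eq_factorial]

theorem sum_factorization_natAbs_sub_le {p : ℕ} (hp : p.Prime) {A B a : ℤ}
    (ha : a ∈ Finset.Icc A B) :
    ∑ x ∈ Finset.Icc A B, ((x - a).natAbs.factorization p : ℝ) ≤ (B - A) / (p - 1) := by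
  obtain ⟨hA, hB⟩ := Finset.mem_Icc.1 ha
  obtain ⟨m, hm⟩ := Int.eq_ofNat_of_zero_le (sub_nonneg.2 hA)
  obtain ⟨n, hn⟩ := Int.eq_ofNat_of_zero_le (sub_nonneg.2 hB)
  obtain rfl : A = a - m := by lia
  obtain rfl : B = a + n := by lia
  have hsum : ∑ x ∈ Finset.Icc (a - m) (a + n), (x - a).natAbs.factorization p
      = (m ! * n !).factorization p := by
    rw [← Finset.sum_erase (a := a) _ (by simp), ← prod_natAbs_sub_Icc_erase a m n,
      Nat.factorization_prod_apply]
    grind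
  have hle : (m ! * n !).factorization p ≤ (m + n) / (p - 1) :=
    ((Nat.factorization_le_iff_dvd (by positivity) (by positivity)).2
      (Nat.factorial_mul_factorial_dvd_factorial_add m n) p).trans
      (Nat.factorization_factorial_le_div_pred hp _)
  calc ∑ x ∈ Finset.Icc (a - m : ℤ) (a + n), ((x - a).natAbs.factorization p : ℝ)
      ≤ ((m + n) / (p - 1) : ℕ) := by exact_mod_cast hsum.trans_le hle
    _ ≤ ((m + n : ℕ) : ℝ) / ((p - 1 : ℕ) : ℝ) := Nat.cast_div_le
    _ = _ := by rw [Nat.cast_pred hp.pos]; push_cast; ring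

end PrimeSums

section Newton

variable {R : Type*} [CommRing R] [IsDomain R]

theorem exists_multiset_emultiplicity_eval_le {π : R} (hπ : Prime π) {I : Finset R}
    (hI : I.Nonempty) (d : ℕ) {F : R[X]} (hF : ¬ C π ∣ F) (hd : F.natDegree ≤ d) :
    ∃ s : Multiset R, s.card ≤ d ∧ (∀ a ∈ s, a ∈ I) ∧
      ∀ x ∈ I, emultiplicity π (F.eval x) ≤ (s.map fun a => emultiplicity π (x - a)).sum := by
  induction d generalizing F with
  | zero =>
    obtain ⟨c, rfl⟩ := natDegree_eq_zero.1 (Nat.le_zero.1 hd)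
    refine ⟨0, le_rfl, by simp, fun x _ => ?_⟩
    have : ¬ π ∣ c := fun h => hF (C_dvd_iff_dvd_coeff _ _ |>.2 fun i => by
      rw [coeff_C]; split_ifs <;> simp [h])
    simp [emultiplicity_eq_zero.2 this]
  | succ d ih =>
    -- Newton interpolation, `F = F(a) + (X - a) G`: by maximality of `a`, the term `F(a)` does not
    -- affect the bound, and if `π ∣ G` then `π ∤ F(a)`, so no value is divisible by `π`.
    obtain ⟨a, haI, hmax⟩ := I.exists_max_image (fun x => emultiplicity π (F.eval x)) hI
    set G := F /ₘ (X - C a)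
    have hFG : C (F.eval a) + (X - C a) * G = F := by
      rw [← modByMonic_X_sub_C_eq_C_eval, modByMonic_add_div]
    have hGdeg : G.natDegree ≤ d := by
      rw [natDegree_divByMonic _ (monic_X_sub_C a), natDegree_X_sub_C]
      lia
    by_cases hG : C π ∣ G
    · have hFa : ¬ π ∣ F.eval a := fun h => hF <| by
        rw [← hFG]
        exact dvd_add (map_dvd C h) (hG.mul_left _)
      refine ⟨0, by simp, by simp, fun x hx => ?_⟩
      simpa [emultiplicity_eq_zero.2 hFa] using hmax x hx
    · obtain ⟨s, hcard, hsI, hs⟩ := ih hG hGdeg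
      refine ⟨a ::ₘ s, by simpa using hcard, by simpa [haI] using hsI, fun x hx => ?_⟩
      have hdiff : F.eval x - F.eval a = (x - a) * G.eval x := by
        conv_lhs => rw [← hFG]
        simp
      calc emultiplicity π (F.eval x)
          ≤ emultiplicity π (F.eval x - F.eval a) := by
            rw [sub_eq_add_neg]
            refine (le_min le_rfl ?_).trans min_le_emultiplicity_add
            rw [emultiplicity_neg]
            exact hmax x hx
        _ = emultiplicity π (x - a) + emultiplicity π (G.eval x) := by
            rw [hdiff, emultiplicity_mul hπ]
        _ ≤ _ := by
            rw [Multiset.map_cons, Multiset.sum_cons]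
            gcongr
            exact hs x hx

end Newton

section Resultant

theorem isCoprime_map_algebraMap_of_isRelPrime {R : Type*} (K : Type*) [CommRing R] [IsDomain R]
    [NormalizedGCDMonoid R] [Field K] [Algebra R K] [IsFractionRing R K] {P Q : R[X]}
    (h : IsRelPrime P Q) : IsCoprime (P.map (algebraMap R K)) (Q.map (algebraMap R K)) := by
  have hinj : Function.Injective (algebraMap R K) := IsFractionRing.injective R K
  rw [← isRelPrime_iff_isCoprime]
  intro g hgP hgQ
  have hg : g ≠ 0 := by
    rintro rfl
    rw [zero_dvd_iff, Polynomial.map_eq_zero_iff hinj] at hgP hgQ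
    subst hgP hgQ
    exact not_isRelPrime_zero_zero h
  set N := IsLocalization.integerNormalization (nonZeroDivisors R) g
  obtain ⟨b, hb, hN⟩ := IsLocalization.integerNormalization_spec (nonZeroDivisors R) g
  have hNg : N.primPart.map (algebraMap R K) ∣ g := by
    have hunit : IsUnit (C (algebraMap R K b)) :=
      isUnit_C.2 (IsLocalization.map_units K ⟨b, hb⟩)
    rw [← hunit.dvd_mul_left, ← smul_eq_C_mul, algebraMap_smul, ← hN]
    exact Polynomial.map_dvd (algebraMap R K) N.primPart_dvd
  refine isUnit_or_eq_zero_of_isUnit_integerNormalization_primPart (R := R) hg (h ?_ ?_)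
  · exact (N.isPrimitive_primPart.dvd_iff_fraction_map_dvd_fraction_map K).2 (hNg.trans hgP)
  · exact (N.isPrimitive_primPart.dvd_iff_fraction_map_dvd_fraction_map K).2 (hNg.trans hgQ)

theorem resultant_ne_zero_of_isRelPrime {R : Type*} [CommRing R] [IsDomain R]
    [NormalizedGCDMonoid R] {P Q : R[X]} (h : IsRelPrime P Q) : P.resultant Q ≠ 0 := by
  have hinj : Function.Injective (algebraMap R (FractionRing R)) := IsFractionRing.injective _ _
  have hres := resultant_ne_zero _ _ (isCoprime_map_algebraMap_of_isRelPrime (FractionRing R) h)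
  rw [natDegree_map_eq_of_injective hinj, natDegree_map_eq_of_injective hinj,
    resultant_map_map] at hres
  exact ne_zero_of_map hres

theorem dvd_resultant_of_dvd_eval {R : Type*} [CommRing R] {P Q : R[X]} (h : IsRelPrime P Q)
    {c x : R} (hP : c ∣ P.eval x) (hQ : c ∣ Q.eval x) : c ∣ P.resultant Q := by
  by_cases hconst : P.natDegree ≠ 0 ∨ Q.natDegree ≠ 0
  · obtain ⟨U, V, -, -, hUV⟩ := exists_mul_add_mul_eq_C_resultant P Q le_rfl le_rfl hconst
    have heval := congrArg (eval x) hUV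
    rw [eval_add, eval_mul, eval_mul, eval_C] at heval
    exact heval ▸ dvd_add (hP.mul_right _) (hQ.mul_right _)
  · push Not at hconst
    obtain ⟨p, rfl⟩ := natDegree_eq_zero.1 hconst.1
    obtain ⟨q, rfl⟩ := natDegree_eq_zero.1 hconst.2
    rw [eval_C] at hP hQ
    exact (isUnit_C.1 (h (map_dvd C hP) (map_dvd C hQ))).dvd

theorem abv_resultant_le {R S : Type*} [CommRing R] [Nontrivial R] [CommRing S] [LinearOrder S]
    [IsStrictOrderedRing S] (abv : AbsoluteValue R S) {f g : R[X]} {c : S}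
    (hf : ∀ i, abv (f.coeff i) ≤ c) (hg : ∀ i, abv (g.coeff i) ≤ c) (m n : ℕ) :
    abv (f.resultant g m n) ≤ (m + n)! • c ^ (m + n) := by
  have hc : 0 ≤ c := (abv.nonneg _).trans (hf 0)
  have hentry : ∀ i j, abv (sylvester f g m n i j) ≤ c := by
    intro i j
    rw [sylvester, Matrix.of_apply]
    induction j using Fin.addCases with
    | left j => rw [Fin.addCases_left]; split_ifs <;> simp [hg, hc]
    | right j => rw [Fin.addCases_right]; split_ifs <;> simp [hf, hc]
  simpa [resultant] using Matrix.det_le hentry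

end Resultant

section Height

theorem fracHeight_eq_log_max_supNorm (P Q : ℤ[X]) :
    fracHeight P Q = Real.log (max P.supNorm Q.supNorm) := by
  simp only [fracHeight, supNorm_eq_iSup, Int.norm_eq_abs]

theorem one_le_supNorm {P : ℤ[X]} (hP : P ≠ 0) : 1 ≤ P.supNorm := by
  obtain ⟨i, hi⟩ := P.exists_eq_supNorm
  rw [hi, Int.norm_eq_abs]
  have : P.coeff i ≠ 0 := fun h => hP (supNorm_eq_zero_iff P |>.1 (by rw [hi, h, norm_zero]))
  exact_mod_cast Int.one_le_abs this

theorem exp_fracHeight (P : ℤ[X]) {Q : ℤ[X]} (hQ : Q ≠ 0) :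
    Real.exp (fracHeight P Q) = max P.supNorm Q.supNorm := by
  rw [fracHeight_eq_log_max_supNorm, Real.exp_log]
  exact lt_max_of_lt_right (zero_lt_one.trans_le (one_le_supNorm hQ))

theorem log_natAbs_resultant_le {P Q : ℤ[X]} (hQ : Q ≠ 0) {d : ℕ} (hd : 1 ≤ d)
    (hPd : P.natDegree ≤ d) (hQd : Q.natDegree ≤ d) :
    Real.log (P.resultant Q).natAbs ≤ 2 * d * (Real.log (2 * d) + fracHeight P Q) := by
  set c := max P.supNorm Q.supNorm
  set k := P.natDegree + Q.natDegree
  have hk : k ≤ 2 * d := by lia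
  have hd' : (1 : ℝ) ≤ 2 * d := mod_cast (by lia : 1 ≤ 2 * d)
  have hc1 : 1 ≤ c := le_max_of_le_right (one_le_supNorm hQ)
  have hbase : 1 ≤ 2 * d * c := one_le_mul_of_one_le_of_one_le hd' hc1
  have hres : ((P.resultant Q).natAbs : ℝ) ≤ (2 * d * c) ^ (2 * d) := by
    calc ((P.resultant Q).natAbs : ℝ) ≤ k ! • c ^ k := by
          rw [Nat.cast_natAbs, Int.cast_abs]
          exact abv_resultant_le (abv := AbsoluteValue.abs.comp (f := Int.castRingHom ℝ)
            Int.cast_injective) (fun i => (le_supNorm P i).trans (le_max_left _ _))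
            (fun i => (le_supNorm Q i).trans (le_max_right _ _)) _ _
      _ ≤ (2 * d : ℝ) ^ k * c ^ k := by
          rw [nsmul_eq_mul]
          gcongr
          exact_mod_cast k.factorial_le_pow.trans (Nat.pow_le_pow_left hk k)
      _ = (2 * d * c) ^ k := (mul_pow _ _ _).symm
      _ ≤ (2 * d * c) ^ (2 * d) := pow_le_pow_right₀ hbase hk
  calc Real.log (P.resultant Q).natAbs ≤ Real.log ((2 * d * c) ^ (2 * d)) := by
        obtain h0 | hpos := (P.resultant Q).natAbs.eq_zero_or_pos
        · rw [h0, Nat.cast_zero, Real.log_zero]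
          exact Real.log_nonneg (one_le_pow₀ hbase)
        · gcongr
    _ = 2 * d * (Real.log (2 * d) + fracHeight P Q) := by
        rw [Real.log_pow, Real.log_mul (by positivity) (by positivity),
          fracHeight_eq_log_max_supNorm]
        push_cast
        rfl

theorem log_max_abs_eq (a : ℤ) {b : ℤ} (hb : b ≠ 0) :
    Real.log (max |(a : ℝ)| |(b : ℝ)|) = Real.log (Int.gcd a b) + ratHeight (a / b) := by
  set q : ℚ := a / b
  obtain ⟨c, hac, hbc⟩ := Rat.num_den_mk (q := q) hb (Rat.divInt_eq_div a b).symm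
  have hgcd : |(c : ℝ)| = a.gcd b := by
    have hreduced : Int.gcd q.num q.den = 1 := q.reduced
    rw [hac, hbc, Int.gcd_mul_left, hreduced, mul_one, Nat.cast_natAbs, Int.cast_abs]
  have hc : |(c : ℝ)| ≠ 0 := by
    rw [hgcd]
    exact_mod_cast Int.gcd_ne_zero_right hb
  have habs_num : |(a : ℝ)| = |(c : ℝ)| * |(q.num : ℝ)| := by
    rw [← abs_mul]
    exact_mod_cast congrArg abs hac
  have habs_den : |(b : ℝ)| = |(c : ℝ)| * q.den := by
    rw [← Nat.abs_cast q.den, ← abs_mul]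
    exact_mod_cast congrArg abs hbc
  rw [habs_num, habs_den, ← mul_max_of_nonneg _ _ (abs_nonneg _), Real.log_mul hc, ← hgcd,
    ratHeight]
  exact (lt_max_of_lt_right (Nat.cast_pos.2 q.den_pos)).ne'

end Height

section Interpolation

variable {K ι : Type*} [NormedField K]

theorem norm_coeff_prod_basisDivisor_le {x : K} {v : ι → K} {M : ℝ} {s : Finset ι}
    (hv : ∀ i ∈ s, ‖v i‖ ≤ M) (hsep : ∀ i ∈ s, 1 ≤ ‖x - v i‖) (k : ℕ) :
    ‖(∏ i ∈ s, Lagrange.basisDivisor x (v i)).coeff k‖ ≤ (1 + M) ^ s.card := by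
  classical
  induction s using Finset.induction_on generalizing k with
  | empty => simp [coeff_one]; split_ifs <;> simp
  | insert j s hj ih =>
    have ih := ih (fun i hi => hv i (Finset.mem_insert_of_mem hi))
      (fun i hi => hsep i (Finset.mem_insert_of_mem hi))
    have hvj := hv j (Finset.mem_insert_self j s)
    have hM : 0 ≤ M := (norm_nonneg _).trans hvj
    have hinv : ‖(x - v j)⁻¹‖ ≤ 1 := by
      rw [norm_inv]
      exact inv_le_one_of_one_le₀ (hsep j (Finset.mem_insert_self j s))
    rw [Finset.prod_insert hj, Finset.card_insert_of_notMem hj, pow_succ', Lagrange.basisDivisor,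
      mul_assoc, coeff_C_mul, norm_mul]
    refine (mul_le_of_le_one_left (norm_nonneg _) hinv).trans ?_
    set G := ∏ i ∈ s, Lagrange.basisDivisor x (v i)
    rw [sub_mul, coeff_sub, coeff_C_mul, add_mul, one_mul]
    refine (norm_sub_le _ _).trans (add_le_add ?_ ?_)
    · cases k with
      | zero => simpa using by positivity
      | succ k => simpa using ih k
    · rw [norm_mul]
      gcongr
      exact ih k

theorem norm_coeff_le_of_forall_norm_eval_le {v : ι → K} {s : Finset ι} {M Y : ℝ} {P : K[X]}
    (hP : P.degree < s.card) (hv : ∀ i ∈ s, ‖v i‖ ≤ M)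
    (hsep : (s : Set ι).Pairwise fun i j => 1 ≤ ‖v i - v j‖)
    (hY : ∀ i ∈ s, ‖P.eval (v i)‖ ≤ Y) (k : ℕ) :
    ‖P.coeff k‖ ≤ s.card * (Y * (1 + M) ^ (s.card - 1)) := by
  classical
  have hinj : Set.InjOn v s := fun i hi j hj hij => by
    by_contra hne
    have : 1 ≤ ‖v i - v j‖ := hsep hi hj hne
    rw [hij, sub_self, norm_zero] at this
    linarith
  have hterm : ∀ i ∈ s, ‖(C (P.eval (v i)) * Lagrange.basis s v i).coeff k‖
      ≤ Y * (1 + M) ^ (s.card - 1) := by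
    intro i hi
    rw [coeff_C_mul, norm_mul, ← Finset.card_erase_of_mem hi]
    refine mul_le_mul (hY i hi) ?_ (norm_nonneg _) ((norm_nonneg _).trans (hY i hi))
    exact norm_coeff_prod_basisDivisor_le (fun j hj => hv j (Finset.mem_of_mem_erase hj))
      (fun j hj => hsep hi (Finset.mem_of_mem_erase hj) (Finset.ne_of_mem_erase hj).symm) k
  rw [Lagrange.eq_interpolate hinj hP, Lagrange.interpolate_apply, finsetSum_coeff]
  exact (norm_sum_le_of_le s hterm).trans_eq (by rw [Finset.sum_const, nsmul_eq_mul])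

theorem supNorm_le_of_forall_abs_eval_le {P : ℤ[X]} {T : Finset ℤ} {M Y : ℝ}
    (hP : P.natDegree < T.card) (hM : ∀ x ∈ T, |(x : ℝ)| ≤ M)
    (hY : ∀ x ∈ T, |((P.eval x : ℤ) : ℝ)| ≤ Y) :
    P.supNorm ≤ T.card * (Y * (1 + M) ^ (T.card - 1)) := by
  obtain ⟨k, hk⟩ := P.exists_eq_supNorm
  have hdeg : (P.map (Int.castRingHom ℝ)).degree < T.card :=
    degree_map_le.trans_lt ((degree_le_natDegree).trans_lt (mod_cast hP))
  have hsep : (T : Set ℤ).Pairwise fun x y => 1 ≤ ‖(x : ℝ) - y‖ := fun x _ y _ hxy => by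
    beta_reduce
    rw [← Int.cast_sub, Int.norm_cast_real, Int.norm_eq_abs]
    exact_mod_cast Int.one_le_abs (sub_ne_zero.2 hxy)
  have := norm_coeff_le_of_forall_norm_eval_le hdeg hM hsep
    (fun x hx => by simpa using hY x hx) k
  simpa [hk, Int.norm_eq_abs] using this

end Interpolation

section Cancellation

theorem emultiplicity_eq_factorization_natAbs {p : ℕ} (hp : p.Prime) {n : ℤ} (hn : n ≠ 0) :
    emultiplicity (p : ℤ) n = n.natAbs.factorization p := by
  have := Fact.mk hp
  rw [Nat.factorization_def _ hp, padicValNat_eq_emultiplicity (Int.natAbs_ne_zero.2 hn),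
    ← Int.natCast_emultiplicity]
  exact emultiplicity_eq_of_associated_right (Int.associated_natAbs n)

/- At a node `x = a` the term `(x - a).natAbs.factorization p` has the junk value `0` instead of
`∞`; the summand `r.factorization p` makes up for it. -/
theorem exists_multiset_factorization_le_of_dvd_eval {p : ℕ} (hp : p.Prime) {F : ℤ[X]}
    (hF : ¬ C (p : ℤ) ∣ F) {d : ℕ} (hd : F.natDegree ≤ d) {I : Finset ℤ} (hI : I.Nonempty)
    {g : ℤ → ℕ} {r : ℕ} (hr : r ≠ 0) (hgr : ∀ x ∈ I, g x ∣ r)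
    (hgF : ∀ x ∈ I, (g x : ℤ) ∣ F.eval x) :
    ∃ s : Multiset ℤ, s.card ≤ d ∧ (∀ a ∈ s, a ∈ I) ∧ ∀ x ∈ I, (g x).factorization p ≤
      (s.map fun a => (if x = a then r.factorization p else 0) +
        (x - a).natAbs.factorization p).sum := by
  obtain ⟨s, hcard, hsI, hs⟩ :=
    exists_multiset_emultiplicity_eval_le (Nat.prime_iff_prime_int.1 hp) hI d hF hd
  refine ⟨s, hcard, hsI, fun x hx => ?_⟩
  have hgx : g x ≠ 0 := ne_zero_of_dvd_ne_zero hr (hgr x hx)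
  by_cases hxs : x ∈ s
  · calc (g x).factorization p ≤ r.factorization p :=
          (Nat.factorization_le_iff_dvd hgx hr).2 (hgr x hx) p
      _ = (if x = x then r.factorization p else 0) + (x - x).natAbs.factorization p := by simp
      _ ≤ _ := Multiset.single_le_sum (fun _ _ => Nat.zero_le _) _
          (Multiset.mem_map.2 ⟨x, hxs, rfl⟩)
  · have hne : ∀ a ∈ s, x ≠ a := fun a ha h => hxs (h ▸ ha)
    have hle : ((g x).factorization p : ℕ∞) ≤
        (s.map fun a => ((x - a).natAbs.factorization p : ℕ∞)).sum := by
      calc ((g x).factorization p : ℕ∞) = emultiplicity (p : ℤ) (g x) := by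
            rw [emultiplicity_eq_factorization_natAbs hp (mod_cast hgx), Int.natAbs_natCast]
        _ ≤ emultiplicity (p : ℤ) (F.eval x) :=
            emultiplicity_le_emultiplicity_of_dvd_right (hgF x hx)
        _ ≤ (s.map fun a => emultiplicity (p : ℤ) (x - a)).sum := hs x hx
        _ = _ := congrArg _ <| Multiset.map_congr rfl fun a ha =>
            emultiplicity_eq_factorization_natAbs hp (sub_ne_zero.2 (hne a ha))
    have hcongr : (s.map fun a => (if x = a then r.factorization p else 0) +
        (x - a).natAbs.factorization p) = s.map fun a => (x - a).natAbs.factorization p :=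
      Multiset.map_congr rfl fun a ha => by rw [if_neg (hne a ha), zero_add]
    rw [hcongr, ← Nat.cast_le (α := ℕ∞), Nat.cast_multiset_sum, Multiset.map_map]
    exact hle

theorem sum_factorization_le_of_dvd_eval {p : ℕ} (hp : p.Prime) {F : ℤ[X]}
    (hF : ¬ C (p : ℤ) ∣ F) {d : ℕ} (hd : F.natDegree ≤ d) {A B : ℤ} (hAB : A ≤ B) {I : Finset ℤ}
    (hI : I ⊆ Finset.Icc A B) {g : ℤ → ℕ} {r : ℕ} (hr : r ≠ 0) (hgr : ∀ x ∈ I, g x ∣ r)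
    (hgF : ∀ x ∈ I, (g x : ℤ) ∣ F.eval x) :
    ∑ x ∈ I, ((g x).factorization p : ℝ) ≤ d * (r.factorization p + (B - A) / (p - 1)) := by
  have hp1 : (1 : ℝ) ≤ p := mod_cast hp.one_le
  have hAB' : (A : ℝ) ≤ B := mod_cast hAB
  have hbound : (0 : ℝ) ≤ r.factorization p + (B - A) / (p - 1) :=
    add_nonneg (Nat.cast_nonneg _) (div_nonneg (sub_nonneg.2 hAB') (sub_nonneg.2 hp1))
  obtain rfl | hne := I.eq_empty_or_nonempty
  · simpa using mul_nonneg d.cast_nonneg hbound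
  obtain ⟨s, hcard, hsI, hs⟩ :=
    exists_multiset_factorization_le_of_dvd_eval hp hF hd hne hr hgr hgF
  set w : ℤ → ℤ → ℕ := fun x a =>
    (if x = a then r.factorization p else 0) + (x - a).natAbs.factorization p
  have hw : ∀ a ∈ s, ∑ x ∈ I, (w x a : ℝ) ≤ r.factorization p + (B - A) / (p - 1) := by
    intro a ha
    simp only [w, Nat.cast_add, Finset.sum_add_distrib, Nat.cast_ite, Nat.cast_zero,
      Finset.sum_ite_eq', hsI a ha, if_true]
    gcongr
    exact (Finset.sum_le_sum_of_subset_of_nonneg hI fun x _ _ => Nat.cast_nonneg _).trans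
      (sum_factorization_natAbs_sub_le hp (hI (hsI a ha)))
  calc ∑ x ∈ I, ((g x).factorization p : ℝ) ≤ ∑ x ∈ I, (s.map fun a => (w x a : ℝ)).sum := by
        gcongr with x hx
        have := hs x hx
        rw [← Nat.cast_le (α := ℝ), Nat.cast_multiset_sum, Multiset.map_map] at this
        exact this
    _ = (s.map fun a => ∑ x ∈ I, (w x a : ℝ)).sum := Multiset.sum_map_sum_map _ _
    _ ≤ s.card • (r.factorization p + (B - A) / (p - 1) : ℝ) := by
        rw [← Multiset.card_map]
        exact Multiset.sum_le_card_nsmul _ _ (by simpa using hw)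
    _ ≤ d * (r.factorization p + (B - A) / (p - 1)) := by
        rw [nsmul_eq_mul]
        gcongr

/-- The factor that cancels in the fraction `P(x) / Q(x)` when it is put in lowest terms. -/
def evalGCD (P Q : ℤ[X]) (x : ℤ) : ℕ := Int.gcd (P.eval x) (Q.eval x)

theorem evalGCD_dvd_natAbs_resultant {P Q : ℤ[X]} (h : IsRelPrime P Q) (x : ℤ) :
    evalGCD P Q x ∣ (P.resultant Q).natAbs :=
  Int.natCast_dvd.1 (dvd_resultant_of_dvd_eval h (Int.gcd_dvd_left _ _) (Int.gcd_dvd_right _ _))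

theorem sum_factorization_evalGCD_le {P Q : ℤ[X]} (h : IsRelPrime P Q) {d : ℕ}
    (hPd : P.natDegree ≤ d) (hQd : Q.natDegree ≤ d) {A B : ℤ} (hAB : A ≤ B) {S : Finset ℤ}
    (hS : S ⊆ Finset.Icc A B) {p : ℕ} (hp : p.Prime) :
    ∑ x ∈ S, ((evalGCD P Q x).factorization p : ℝ)
      ≤ d * ((P.resultant Q).natAbs.factorization p + (B - A) / (p - 1)) := by
  have hR : (P.resultant Q).natAbs ≠ 0 := Int.natAbs_ne_zero.2 (resultant_ne_zero_of_isRelPrime h)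
  have hdvd : ∀ x ∈ S, evalGCD P Q x ∣ (P.resultant Q).natAbs :=
    fun x _ => evalGCD_dvd_natAbs_resultant h x
  by_cases hpP : C (p : ℤ) ∣ P
  · have hpQ : ¬ C (p : ℤ) ∣ Q := fun hpQ =>
      (Nat.prime_iff_prime_int.1 hp).not_isUnit (isUnit_C.1 (h hpP hpQ))
    exact sum_factorization_le_of_dvd_eval hp hpQ hQd hAB hS hR hdvd
      fun x _ => Int.gcd_dvd_right _ _
  · exact sum_factorization_le_of_dvd_eval hp hpP hPd hAB hS hR hdvd
      fun x _ => Int.gcd_dvd_left _ _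

theorem sum_log_evalGCD_le {P Q : ℤ[X]} (h : IsRelPrime P Q) {d : ℕ}
    (hPd : P.natDegree ≤ d) (hQd : Q.natDegree ≤ d) {A B : ℤ} (hAB : A ≤ B) {S : Finset ℤ}
    (hS : S ⊆ Finset.Icc A B) :
    ∑ x ∈ S, Real.log (evalGCD P Q x) ≤ d * Real.log (P.resultant Q).natAbs
      + d * (B - A) * (4 * Real.log (Real.log (P.resultant Q).natAbs + 1) + 1) := by
  set R := (P.resultant Q).natAbs
  have hR : R ≠ 0 := Int.natAbs_ne_zero.2 (resultant_ne_zero_of_isRelPrime h)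
  have hAB' : (0 : ℝ) ≤ B - A := sub_nonneg.2 (mod_cast hAB)
  calc ∑ x ∈ S, Real.log (evalGCD P Q x)
      = ∑ p ∈ R.primeFactors, (∑ x ∈ S, ((evalGCD P Q x).factorization p : ℝ)) * Real.log p := by
        simp only [Finset.sum_mul]
        rw [Finset.sum_comm]
        exact Finset.sum_congr rfl fun x _ =>
          log_eq_sum_primeFactors_of_dvd hR (evalGCD_dvd_natAbs_resultant h x)
    _ ≤ ∑ p ∈ R.primeFactors, d * (R.factorization p + (B - A) / (p - 1)) * Real.log p := by
        gcongr with p hp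
        exact sum_factorization_evalGCD_le h hPd hQd hAB hS (Nat.prime_of_mem_primeFactors hp)
    _ = d * ∑ p ∈ R.primeFactors, R.factorization p * Real.log p
        + d * (B - A) * ∑ p ∈ R.primeFactors, Real.log p / (p - 1) := by
        rw [Finset.mul_sum, Finset.mul_sum, ← Finset.sum_add_distrib]
        exact Finset.sum_congr rfl fun p _ => by ring
    _ ≤ d * Real.log R + d * (B - A) * (4 * Real.log (Real.log R + 1) + 1) := by
        rw [← log_eq_sum_primeFactors_of_dvd hR dvd_rfl]
        gcongr
        exact sum_log_div_pred_primeFactors_le hR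

end Cancellation

section HeightBound

theorem max_abs_eval_le_exp {P Q : ℤ[X]} {x : ℤ} (hQx : Q.eval x ≠ 0) {H t : ℝ}
    (hH : ratHeight ((P.eval x : ℤ) / (Q.eval x : ℤ)) ≤ H)
    (ht : Real.log (evalGCD P Q x) ≤ t) :
    max |((P.eval x : ℤ) : ℝ)| |((Q.eval x : ℤ) : ℝ)| ≤ Real.exp (H + t) := by
  have hpos : 0 < max |((P.eval x : ℤ) : ℝ)| |((Q.eval x : ℤ) : ℝ)| :=
    lt_max_of_lt_right (abs_pos.2 (mod_cast hQx))
  rw [← Real.log_le_iff_le_exp hpos, log_max_abs_eq _ hQx, add_comm H]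
  exact add_le_add ht hH

theorem fracHeight_le_of_forall_ratHeight_le {P Q : ℤ[X]} {d : ℕ} (hPd : P.natDegree ≤ d)
    (hQd : Q.natDegree ≤ d) {T : Finset ℤ} (hT : T.card = d + 1) {M : ℝ} (hM : 1 ≤ M)
    (hTM : ∀ x ∈ T, |(x : ℝ)| ≤ M) (hQ : ∀ x ∈ T, Q.eval x ≠ 0) {H t : ℝ}
    (hH : ∀ x ∈ T, ratHeight ((P.eval x : ℤ) / (Q.eval x : ℤ)) ≤ H)
    (ht : ∀ x ∈ T, Real.log (evalGCD P Q x) ≤ t) :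
    fracHeight P Q ≤ H + t + d * Real.log (2 * M) + Real.log (d + 1) := by
  have hQ0 : Q ≠ 0 := by
    obtain ⟨x, hx⟩ : T.Nonempty := Finset.card_pos.1 (by lia)
    rintro rfl
    exact hQ x hx eval_zero
  have hvalue : ∀ x ∈ T, max |((P.eval x : ℤ) : ℝ)| |((Q.eval x : ℤ) : ℝ)| ≤ Real.exp (H + t) :=
    fun x hx => max_abs_eval_le_exp (hQ x hx) (hH x hx) (ht x hx)
  have hsup : max P.supNorm Q.supNorm ≤ T.card * (Real.exp (H + t) * (1 + M) ^ (T.card - 1)) :=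
    max_le
      (supNorm_le_of_forall_abs_eval_le (by lia) hTM
        fun x hx => (le_max_left _ _).trans (hvalue x hx))
      (supNorm_le_of_forall_abs_eval_le (by lia) hTM
        fun x hx => (le_max_right _ _).trans (hvalue x hx))
  rw [← Real.exp_le_exp, exp_fracHeight P hQ0]
  calc max P.supNorm Q.supNorm ≤ T.card * (Real.exp (H + t) * (1 + M) ^ (T.card - 1)) := hsup
    _ ≤ (d + 1) * (Real.exp (H + t) * (2 * M) ^ d) := by
        rw [hT, Nat.add_sub_cancel, Nat.cast_add_one]
        gcongr
        linarith
    _ = Real.exp (H + t + d * Real.log (2 * M) + Real.log (d + 1)) := by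
        rw [Real.exp_add _ (Real.log _), Real.exp_add _ (d * _), Real.exp_log (by positivity),
          ← Real.log_pow, Real.exp_log (by positivity)]
        ring

theorem exists_subset_card_eq_forall_mul_le_sum {α R : Type*} [Ring R] [LinearOrder R]
    [IsStrictOrderedRing R] {S : Finset α} {f : α → R}
    (hf : ∀ x ∈ S, 0 ≤ f x) {d : ℕ} (hd : d < S.card) :
    ∃ T ⊆ S, T.card = d + 1 ∧ ∀ x ∈ T, (S.card - d) * f x ≤ ∑ y ∈ S, f y := by
  set V := ∑ y ∈ S, f y
  -- Markov's inequality: fewer than `S.card - d` points violate the bound.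
  have hsmall : d + 1 ≤ (S.filter fun x => (S.card - d) * f x ≤ V).card := by
    by_contra! hlt
    set W := S.filter fun x => ¬ (S.card - d) * f x ≤ V
    have hcard := S.card_filter_add_card_filter_not fun x => (S.card - d) * f x ≤ V
    have hWcard : (S.card - d : R) ≤ W.card := by
      rw [sub_le_iff_le_add]
      exact_mod_cast (by lia : S.card ≤ W.card + d)
    have hW : W.Nonempty := Finset.card_pos.1 (by lia)
    have hd' : (0 : R) ≤ S.card - d := sub_nonneg.2 (mod_cast hd.le)
    have : (S.card - d) * V < (S.card - d) * V := by
      calc (S.card - d) * V ≤ W.card * V := by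
            gcongr
            exact Finset.sum_nonneg hf
        _ = ∑ _ ∈ W, V := by rw [Finset.sum_const, nsmul_eq_mul]
        _ < ∑ x ∈ W, (S.card - d) * f x :=
            Finset.sum_lt_sum_of_nonempty hW fun x hx => not_le.1 (Finset.mem_filter.1 hx).2
        _ = (S.card - d) * ∑ x ∈ W, f x := (Finset.mul_sum _ _ _).symm
        _ ≤ (S.card - d) * V := by
            gcongr
            exact Finset.sum_le_sum_of_subset_of_nonneg (Finset.filter_subset _ _)
              fun x hx _ => hf x hx
    exact lt_irrefl _ this
  obtain ⟨T, hTS, hT⟩ := Finset.exists_subset_card_eq hsmall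
  exact ⟨T, hTS.trans (Finset.filter_subset _ _), hT, fun x hx => (Finset.mem_filter.1 (hTS hx)).2⟩

theorem fracHeight_le_add_average_log_evalGCD {P Q : ℤ[X]} {d : ℕ} (hPd : P.natDegree ≤ d)
    (hQd : Q.natDegree ≤ d) {S : Finset ℤ} (hdS : d < S.card) {M : ℝ} (hM : 1 ≤ M)
    (hSM : ∀ x ∈ S, |(x : ℝ)| ≤ M) (hQ : ∀ x ∈ S, Q.eval x ≠ 0) {H : ℝ}
    (hH : ∀ x ∈ S, ratHeight ((P.eval x : ℤ) / (Q.eval x : ℤ)) ≤ H) :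
    fracHeight P Q ≤ H + (∑ x ∈ S, Real.log (evalGCD P Q x)) / (S.card - d)
      + d * Real.log (2 * M) + Real.log (d + 1) := by
  obtain ⟨T, hTS, hT, hTle⟩ := exists_subset_card_eq_forall_mul_le_sum
    (fun x _ => Real.log_natCast_nonneg (evalGCD P Q x)) hdS
  have hpos : (0 : ℝ) < S.card - d := sub_pos.2 (mod_cast hdS)
  exact fracHeight_le_of_forall_ratHeight_le hPd hQd hT hM (fun x hx => hSM x (hTS hx))
    (fun x hx => hQ x (hTS hx)) (fun x hx => hH x (hTS hx))
    fun x hx => (le_div_iff₀' hpos).2 (hTle x hx)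

end HeightBound

section RealInequalities

variable {d η H L D t : ℝ}

theorem add_one_le_of_le_mul_log_add {h l : ℝ} (hd : 1 ≤ d) (hH : 4 ≤ H) (hl : l ≤ H)
    (hL : L ≤ 2 * d * (Real.log (2 * d) + h))
    (hh : h ≤ H + t + d * l + Real.log (d + 1)) :
    L + 1 ≤ 6 * d ^ 2 * H + 2 * d * t := by
  have hlog2d : Real.log (2 * d) ≤ 2 * d - 1 := Real.log_le_sub_one_of_pos (by linarith)
  have hlogd : Real.log (d + 1) ≤ d := by
    linarith [Real.log_le_sub_one_of_pos (by linarith : 0 < d + 1)]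
  calc L + 1 ≤ 2 * d * ((2 * d - 1) + (H + t + d * H + d)) + 1 := by
        gcongr
        refine hL.trans ?_
        gcongr
        refine hh.trans ?_
        gcongr
    _ ≤ 6 * d ^ 2 * H + 2 * d * t := by
        nlinarith [mul_nonneg (sub_nonneg.2 hd) (sub_nonneg.2 hH), sq_nonneg (d - 1),
          mul_nonneg (sq_nonneg d) (sub_nonneg.2 hH)]

theorem log_le_two_mul_log_add {w y : ℝ} (hw : 1 ≤ w) (hH : 4 ≤ H) (ht : 0 ≤ t) (hy : 0 < y)
    (hyw : y ≤ 6 * w ^ 2 * H + 2 * w * t) :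
    Real.log y ≤ 2 * Real.log (w * H) + 1 + t / (32 * w) := by
  have : 0 < w := by linarith
  have : 0 < H := by linarith
  have hratio : y / (w * H) ^ 2 / 4 ≤ 3 / 8 + t / (32 * w) := by
    rw [div_div, div_le_iff₀ (by positivity)]
    calc y ≤ 3 / 2 * w ^ 2 * (4 * H) + w * t / 8 * (4 * 4) := by linarith
      _ ≤ 3 / 2 * w ^ 2 * (H * H) + w * t / 8 * (H * H) := by gcongr
      _ = (3 / 8 + t / (32 * w)) * ((w * H) ^ 2 * 4) := by field_simp; ring
  have hlog4 : Real.log 4 ≤ 3 / 2 := by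
    have : Real.log 4 = 2 * Real.log 2 := by
      rw [← Real.log_rpow two_pos]
      norm_num
    linarith [Real.log_two_lt_d9]
  have hlog := Real.log_le_sub_one_of_pos (by positivity : 0 < y / (w * H) ^ 2 / 4)
  rw [Real.log_div (by positivity) four_ne_zero, Real.log_div hy.ne' (by positivity),
    Real.log_pow, Nat.cast_ofNat] at hlog
  linarith

theorem le_mul_log_of_le_add_log (hd : 1 ≤ d) (hη : 1 ≤ η) (hH : 4 ≤ H) (ht : 0 ≤ t)
    (hL : 0 ≤ L) (hLt : L + 1 ≤ 6 * d ^ 2 * H + 2 * d * t) (hD : η * d ^ 3 * H ≤ D)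
    (htL : t ≤ 4 / 3 * (η * d * L / D + η * d * (4 * Real.log (L + 1) + 1))) :
    t ≤ 960 * η * d * Real.log (η * d * H) := by
  have hdw : d ≤ η * d := le_mul_of_one_le_left (by linarith) hη
  set w := η * d with hw
  have hw1 : 1 ≤ w := hd.trans hdw
  have hD0 : 0 < D := lt_of_lt_of_le (by positivity) hD
  have hlogX : 1 ≤ Real.log (w * H) := by
    rw [Real.le_log_iff_exp_le (by positivity)]
    nlinarith [Real.exp_one_lt_d9]
  have hlogL : Real.log (L + 1) ≤ 2 * Real.log (w * H) + 1 + t / (32 * w) :=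
    log_le_two_mul_log_add hw1 hH ht (by linarith) (hLt.trans (by gcongr))
  have hquot : w * L / D ≤ 6 + t / 2 := by
    rw [div_le_iff₀ hD0]
    calc w * L ≤ w * (6 * d ^ 2 * H + 2 * d * t) := by gcongr; linarith
      _ = 6 * (η * d ^ 3 * H) + t / 2 * (η * d ^ 2 * 1 * 4) := by rw [hw]; ring
      _ ≤ 6 * (η * d ^ 3 * H) + t / 2 * (η * d ^ 2 * d * H) := by gcongr
      _ = (6 + t / 2) * (η * d ^ 3 * H) := by ring
      _ ≤ (6 + t / 2) * D := by gcongr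
  have hself : t ≤ 8 + 5 / 6 * t + 20 / 3 * w + 32 / 3 * (w * Real.log (w * H)) := by
    calc t ≤ 4 / 3 * (6 + t / 2 + w * (4 * (2 * Real.log (w * H) + 1 + t / (32 * w)) + 1)) :=
          htL.trans (by gcongr)
      _ = _ := by field_simp; ring
  have hwX : w ≤ w * Real.log (w * H) := le_mul_of_one_le_right (by linarith) hlogX
  calc t ≤ 960 * (w * Real.log (w * H)) := by linarith
    _ = 960 * η * d * Real.log (w * H) := by rw [hw]; ring

theorem div_sub_le_of_div_le {V K N : ℝ} (hη : 0 < η) (hD : 0 < D) (hV0 : 0 ≤ V)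
    (hV : V ≤ d * L + d * D * K) (hN : D / η ≤ N) (hdN : 4 * d ≤ N) :
    V / (N - d) ≤ 4 / 3 * (η * d * L / D + η * d * K) := by
  calc V / (N - d) ≤ V / (3 / 4 * (D / η)) := by gcongr; linarith
    _ ≤ (d * L + d * D * K) / (3 / 4 * (D / η)) := by gcongr
    _ = 4 / 3 * (η * d * L / D + η * d * K) := by field_simp

end RealInequalities

/-- Let `A ≤ B` be integers, `D = B − A`, `M = max{|A|, |B|}`. Let
`F = P/Q ∈ ℚ(X)` (with `P, Q ∈ ℤ[X]` coprime, i.e. in lowest terms) have degree at most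
`d ≥ 1`, let `S` be a set of integers in `[A, B]` containing no poles of `F`, let `η ≥ 1`,
and `H ≥ max{4, log(2M)}`. Assume (1) `h(F(x)) ≤ H` for every `x ∈ S`; (2) `S` contains at
least `D/η` elements; (3) `D ≥ max{η·d³·H, 4·η·d}`. Then
`h(F) ≤ H + 960·η·d·log(η·d·H) + d·log(2M) + log(d+1)`. -/
theorem stmt_18 (A B : ℤ) (hAB : A ≤ B) (D M : ℤ) (hD : D = B - A) (hM : M = max |A| |B|)
    (P Q : Polynomial ℤ) (hcop : IsRelPrime P Q) (hQ : Q ≠ 0)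
    (d : ℕ) (hd : 1 ≤ d) (hdeg : max P.natDegree Q.natDegree ≤ d)
    (S : Finset ℤ) (hS : ↑S ⊆ Set.Icc A B) (hpoles : ∀ x ∈ S, Q.eval x ≠ 0)
    (η : ℝ) (hη : 1 ≤ η) (H : ℝ) (hH : max 4 (Real.log (2 * (M : ℝ))) ≤ H)
    (hval : ∀ x ∈ S, ratHeight (((P.eval x : ℤ) : ℚ) / ((Q.eval x : ℤ) : ℚ)) ≤ H)
    (hcard : (D : ℝ) / η ≤ (S.card : ℝ))
    (hbig : max (η * (d : ℝ) ^ 3 * H) (4 * η * (d : ℝ)) ≤ (D : ℝ)) :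
    fracHeight P Q ≤ H + 960 * η * (d : ℝ) * Real.log (η * (d : ℝ) * H)
      + (d : ℝ) * Real.log (2 * (M : ℝ)) + Real.log ((d : ℝ) + 1) := by
  obtain ⟨hPd, hQd⟩ := max_le_iff.1 hdeg
  obtain ⟨hH4, hHM⟩ := max_le_iff.1 hH
  obtain ⟨hDη, hDd⟩ := max_le_iff.1 hbig
  have hd1 : (1 : ℝ) ≤ d := mod_cast hd
  have hD0 : (0 : ℝ) < D := lt_of_lt_of_le (by positivity) hDd
  have hM1 : (1 : ℝ) ≤ M := by
    have : 0 < D := mod_cast hD0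
    exact_mod_cast (by grind : 1 ≤ M)
  have hSM : ∀ x ∈ S, |(x : ℝ)| ≤ M := fun x hx => by
    exact_mod_cast hM ▸ abs_le_max_abs_abs (hS hx).1 (hS hx).2
  have hdS : 4 * (d : ℝ) ≤ S.card := ((le_div_iff₀ (by linarith)).2 (by linarith)).trans hcard
  have hcancel := sum_log_evalGCD_le hcop hPd hQd hAB fun x hx => Finset.mem_Icc.2 (hS hx)
  rw [← Int.cast_sub, ← hD] at hcancel
  set t := (∑ x ∈ S, Real.log (evalGCD P Q x)) / (S.card - d)
  have hsum0 : 0 ≤ ∑ x ∈ S, Real.log (evalGCD P Q x) :=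
    Finset.sum_nonneg fun x _ => Real.log_natCast_nonneg _
  have ht0 : 0 ≤ t := div_nonneg hsum0 (by linarith)
  have hheight : fracHeight P Q ≤ H + t + d * Real.log (2 * M) + Real.log (d + 1) :=
    fracHeight_le_add_average_log_evalGCD hPd hQd
      (mod_cast (by linarith : (d : ℝ) < S.card)) hM1 hSM hpoles hval
  have hres := add_one_le_of_le_mul_log_add hd1 hH4 hHM
    (log_natAbs_resultant_le hQ hd hPd hQd) hheight
  have ht := le_mul_log_of_le_add_log hd1 hη hH4 ht0 (Real.log_natCast_nonneg _) hres hDη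
    (div_sub_le_of_div_le (by linarith) hD0 hsum0 hcancel hcard hdS)
  linarith
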